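/- The black type preorder ⊑•type is an inequational λ-theory (a compatible preorder on λ-terms containing β-conversion); moreover it is neither extensional nor semi-extensional (it contains neither η-conversion nor η-reduction). -/

import Mathlib

set_option autoImplicit false

/-! ### Players -/

inductive Player : Type
  | white
  | black
deriving DecidableEq

/-- The opposite player. -/
def Player.op : Player → Player
  | .white => .black
  | .black => .white

/-- `gamma p q` is `0` if the players agree (silent) and `1` otherwise (interaction). -/
def Player.gamma (p q : Player) : ℕ := if p = q then 0 else 1

/-! ### Ordinary λ-terms (de Bruijn representation) -/

inductive Lam : Type
  | var : ℕ → Lam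
  | lam : Lam → Lam
  | app : Lam → Lam → Lam
deriving DecidableEq

namespace Lam

/-- Shift the free de Bruijn indices ≥ `d` by one. -/
def liftAt : Lam → ℕ → Lam
  | .var n, d => .var (if n < d then n else n + 1)
  | .lam t, d => .lam (t.liftAt (d + 1))
  | .app t u, d => .app (t.liftAt d) (u.liftAt d)

/-- Capture-avoiding substitution of `u` for the de Bruijn index `x`. -/
def subst : Lam → ℕ → Lam → Lam
  | .var n, x, u => if n = x then u else if x < n then .var (n - 1) else .var n
  | .lam t, x, u => .lam (t.subst (x + 1) (u.liftAt 0))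
  | .app t s, x, u => .app (t.subst x u) (s.subst x u)

end Lam

/-- Root β-rule: `(λx.t) u ↦ t[x:=u]`. -/
inductive LBetaRoot : Lam → Lam → Prop
  | beta (t u : Lam) : LBetaRoot (.app (.lam t) u) (t.subst 0 u)

/-- Root η-rule: `λx. t x ↦ t` with `x ∉ FV(t)` (enforced by the lifting). -/
inductive LEtaRoot : Lam → Lam → Prop
  | eta (t : Lam) : LEtaRoot (.lam (.app (t.liftAt 0) (.var 0))) t

/-- Closure of a root relation under all contexts. -/
inductive LFull (R : Lam → Lam → Prop) : Lam → Lam → Prop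
  | root {t u : Lam} : R t u → LFull R t u
  | lam {t u : Lam} : LFull R t u → LFull R (.lam t) (.lam u)
  | appL {t t' : Lam} (u : Lam) : LFull R t t' → LFull R (.app t u) (.app t' u)
  | appR (t : Lam) {u u' : Lam} : LFull R u u' → LFull R (.app t u) (.app t u')

/-- Closure under applicative spine contexts `⟨·⟩ t1 … tk`. -/
inductive LSpine (R : Lam → Lam → Prop) : Lam → Lam → Prop
  | root {t u : Lam} : R t u → LSpine R t u
  | appL {t t' : Lam} (u : Lam) : LSpine R t t' → LSpine R (.app t u) (.app t' u)

/-- Closure under head contexts `λx1…xn.⟨·⟩ t1 … tk`. -/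
inductive LHead (R : Lam → Lam → Prop) : Lam → Lam → Prop
  | spine {t u : Lam} : LSpine R t u → LHead R t u
  | lam {t u : Lam} : LHead R t u → LHead R (.lam t) (.lam u)

/-- β-reduction. -/
def LBeta : Lam → Lam → Prop := LFull LBetaRoot
/-- η-reduction. -/
def LEta : Lam → Lam → Prop := LFull LEtaRoot
/-- Head reduction. -/
def LHStep : Lam → Lam → Prop := LHead LBetaRoot
/-- Multistep head reduction. -/
def LHSteps : Lam → Lam → Prop := Relation.ReflTransGen LHStep

/-- β-conversion (reflexive-symmetric-transitive closure of β-reduction). -/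
def LBetaConv : Lam → Lam → Prop :=
  Relation.ReflTransGen (fun a b => LBeta a b ∨ LBeta b a)
/-- η-conversion. -/
def LEtaConv : Lam → Lam → Prop :=
  Relation.ReflTransGen (fun a b => LEta a b ∨ LEta b a)

/-- Head normal forms: no head step out of `t`. -/
def Lam.LHNF (t : Lam) : Prop := ∀ u, ¬ LHStep t u

/-- Head convergence: `t ⇓h`. -/
def Lam.HConv (t : Lam) : Prop := ∃ h, LHSteps t h ∧ h.LHNF

/-- Ordinary contexts (one hole). -/
inductive LCtx : Type
  | hole : LCtx
  | lam : LCtx → LCtx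
  | appL : LCtx → Lam → LCtx
  | appR : Lam → LCtx → LCtx

/-- Plugging (allowing variable capture). -/
def LCtx.fill : LCtx → Lam → Lam
  | .hole, t => t
  | .lam C, t => .lam (C.fill t)
  | .appL C u, t => .app (C.fill t) u
  | .appR s C, t => .app s (C.fill t)

/-- Head contextual preorder on λ-terms. -/
def CtxLe (t u : Lam) : Prop := ∀ C : LCtx, (C.fill t).HConv → (C.fill u).HConv

/-! ### Checkers terms -/

inductive CTerm : Type
  | var : ℕ → CTerm
  | lam : Player → CTerm → CTerm
  | app : Player → CTerm → CTerm → CTerm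
deriving DecidableEq

namespace CTerm

/-- Shift the free de Bruijn indices ≥ `d` by one. -/
def liftAt : CTerm → ℕ → CTerm
  | .var n, d => .var (if n < d then n else n + 1)
  | .lam p t, d => .lam p (t.liftAt (d + 1))
  | .app p t u, d => .app p (t.liftAt d) (u.liftAt d)

/-- Capture-avoiding substitution of `u` for the de Bruijn index `x`. -/
def subst : CTerm → ℕ → CTerm → CTerm
  | .var n, x, u => if n = x then u else if x < n then .var (n - 1) else .var n
  | .lam p t, x, u => .lam p (t.subst (x + 1) (u.liftAt 0))
  | .app p t s, x, u => .app p (t.subst x u) (s.subst x u)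

/-- The underlying ordinary λ-term of a checkers term. -/
def untag : CTerm → Lam
  | .var n => .var n
  | .lam _ t => .lam t.untag
  | .app _ t u => .app t.untag u.untag

end CTerm

/-- Player lifting: tag every abstraction and application with player `p`. -/
def Lam.tag : Lam → Player → CTerm
  | .var n, _ => .var n
  | .lam t, p => .lam p (t.tag p)
  | .app t u, p => .app p (t.tag p) (u.tag p)

/-- Silent β root rule: the abstraction and the application carry the same player. -/
inductive SilentRoot : CTerm → CTerm → Prop
  | beta (p : Player) (t u : CTerm) : SilentRoot (.app p (.lam p t) u) (t.subst 0 u)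

/-- Interaction β root rule: the application carries the opposite player of the abstraction. -/
inductive InterRoot : CTerm → CTerm → Prop
  | beta (p : Player) (t u : CTerm) : InterRoot (.app p.op (.lam p t) u) (t.subst 0 u)

/-- Closure of a root relation under all checkers contexts. -/
inductive CFull (R : CTerm → CTerm → Prop) : CTerm → CTerm → Prop
  | root {t u : CTerm} : R t u → CFull R t u
  | lam (p : Player) {t u : CTerm} : CFull R t u → CFull R (.lam p t) (.lam p u)
  | appL (p : Player) {t t' : CTerm} (u : CTerm) : CFull R t t' → CFull R (.app p t u) (.app p t' u)
  | appR (p : Player) (t : CTerm) {u u' : CTerm} : CFull R u u' → CFull R (.app p t u) (.app p t u')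

/-- Closure under applicative spine contexts `⟨·⟩ @_{q1} t1 … @_{qk} tk`. -/
inductive CSpine (R : CTerm → CTerm → Prop) : CTerm → CTerm → Prop
  | root {t u : CTerm} : R t u → CSpine R t u
  | appL (p : Player) {t t' : CTerm} (u : CTerm) : CSpine R t t' → CSpine R (.app p t u) (.app p t' u)

/-- Closure under checkers head contexts `λ_{p1}x1…λ_{pn}xn.⟨·⟩ @_{q1} t1 … @_{qk} tk`. -/
inductive CHead (R : CTerm → CTerm → Prop) : CTerm → CTerm → Prop
  | spine {t u : CTerm} : CSpine R t u → CHead R t u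
  | lam (p : Player) {t u : CTerm} : CHead R t u → CHead R (.lam p t) (.lam p u)

/-- Silent β-reduction `→τ`. -/
def StepTau : CTerm → CTerm → Prop := CFull SilentRoot
/-- Interaction β-reduction `→⊛`. -/
def StepInt : CTerm → CTerm → Prop := CFull InterRoot
/-- Checkers β-reduction `→βch`. -/
def StepBch (t u : CTerm) : Prop := StepTau t u ∨ StepInt t u

/-- Silent head reduction `→hτ`. -/
def HStepTau : CTerm → CTerm → Prop := CHead SilentRoot
/-- Interaction head reduction `→h⊛`. -/
def HStepInt : CTerm → CTerm → Prop := CHead InterRoot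
/-- Checkers head reduction `→hch`. -/
def HStepCh (t u : CTerm) : Prop := HStepTau t u ∨ HStepInt t u

/-- Checkers head normal form. -/
def CTerm.HNF (t : CTerm) : Prop := ∀ u, ¬ HStepCh t u

/-- `BigStep t k` means `t ⇓^k`: the (deterministic) checkers head evaluation of `t`
terminates and performs exactly `k` interaction steps. -/
inductive BigStep : CTerm → ℕ → Prop
  | nf {t : CTerm} : t.HNF → BigStep t 0
  | silent {t u : CTerm} {k : ℕ} : HStepTau t u → BigStep u k → BigStep t k
  | inter {t u : CTerm} {k : ℕ} : HStepInt t u → BigStep u k → BigStep t (k + 1)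

/-- `HRed t n i u`: a checkers head reduction sequence from `t` to `u` of length `n`
containing exactly `i` interaction steps. -/
inductive HRed : CTerm → ℕ → ℕ → CTerm → Prop
  | refl (t : CTerm) : HRed t 0 0 t
  | silent {t u s : CTerm} {n i : ℕ} : HStepTau t u → HRed u n i s → HRed t (n + 1) i s
  | inter {t u s : CTerm} {n i : ℕ} : HStepInt t u → HRed u n i s → HRed t (n + 1) (i + 1) s

/-- Checkers contexts (one hole). -/
inductive CCtx : Type
  | hole : CCtx
  | lam : Player → CCtx → CCtx
  | appL : Player → CCtx → CTerm → CCtx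
  | appR : Player → CTerm → CCtx → CCtx

/-- Plugging (allowing variable capture). -/
def CCtx.fill : CCtx → CTerm → CTerm
  | .hole, t => t
  | .lam p C, t => .lam p (C.fill t)
  | .appL p C u, t => .app p (C.fill t) u
  | .appR p s C, t => .app p s (C.fill t)

/-- Player lifting of ordinary contexts. -/
def LCtx.tag : LCtx → Player → CCtx
  | .hole, _ => .hole
  | .lam C, p => .lam p (C.tag p)
  | .appL C u, p => .appL p (C.tag p) (u.tag p)
  | .appR s C, p => .appR p (s.tag p) (C.tag p)

/-- Checkers interaction preorder `≼ctx⊛` on checkers terms. -/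
def IntCtxLe (t u : CTerm) : Prop :=
  ∀ (C : CCtx) (k : ℕ), BigStep (C.fill t) k → BigStep (C.fill u) k

/-- Checkers interaction improvement `≼imp⊛` on checkers terms. -/
def ImpCtxLe (t u : CTerm) : Prop :=
  ∀ (C : CCtx) (k : ℕ), BigStep (C.fill t) k → ∃ k', k' ≤ k ∧ BigStep (C.fill u) k'

/-- Interaction preorder `⊑int` on ordinary λ-terms, via black lifting. -/
def IntLe (t u : Lam) : Prop := IntCtxLe (t.tag .black) (u.tag .black)

/-- Interaction improvement `⊑int·imp` on ordinary λ-terms, via black lifting. -/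
def ImpLe (t u : Lam) : Prop := ImpCtxLe (t.tag .black) (u.tag .black)

/-- Interaction equivalence `≡int`. -/
def IntEq (t u : Lam) : Prop := IntLe t u ∧ IntLe u t

/-- Silent conversion `=τ`: reflexive-symmetric-transitive closure of `→τ`. -/
def SilentConv : CTerm → CTerm → Prop :=
  Relation.ReflTransGen (fun a b => StepTau a b ∨ StepTau b a)


/-! ### Checkers multi types -/

/-- Linear types: an atom `X` and arrows `M →_{p,q} L`, where a multi type `M`
is a finite multiset of linear types (syntactically represented as a list). -/
inductive LType : Type
  | atom : LType
  | arrow : List LType → Player → Player → LType → LType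

/-- Type environments: a multi type for every de Bruijn index. -/
abbrev TEnv : Type := ℕ → Multiset LType

/-- The empty type environment. -/
def TEnv.zero : TEnv := fun _ => 0

/-- Pointwise multiset union of type environments. -/
def TEnv.add (Γ Δ : TEnv) : TEnv := fun n => Γ n + Δ n

/-- The environment assigning `[L]` to `x` and `0` elsewhere. -/
def TEnv.single (x : ℕ) (L : LType) : TEnv := fun n => if n = x then {L} else 0

/-- Extend an environment with a multi type for the freshly bound de Bruijn index `0`. -/
def TEnv.cons (M : Multiset LType) (Γ : TEnv) : TEnv := fun n =>
  match n with
  | 0 => M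
  | n + 1 => Γ n

mutual
  /-- Type derivations `π ▷ Γ ⊢^k t : L` of the checkers multi type system. -/
  inductive Deriv : TEnv → ℕ → CTerm → LType → Type
    | ax (x : ℕ) (L : LType) : Deriv (TEnv.single x L) 0 (.var x) L
    | lam {Γ : TEnv} {k : ℕ} {t : CTerm} {L : LType} (p q : Player) (M : List LType) :
        Deriv (TEnv.cons (Multiset.ofList M) Γ) k t L →
        Deriv Γ k (.lam p t) (.arrow M p q L)
    | app {Γ Δ : TEnv} {k₁ k₂ : ℕ} {t u : CTerm} {M : List LType} {p q : Player} {L : LType} :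
        Deriv Γ k₁ t (.arrow M p q L) → DerivM Δ k₂ u M →
        Deriv (TEnv.add Γ Δ) (k₁ + k₂ + Player.gamma p q) (.app q t u) L
  /-- Derivations `Γ ⊢^k t : M` of a multi type (the `many` rule). -/
  inductive DerivM : TEnv → ℕ → CTerm → List LType → Type
    | nil (t : CTerm) : DerivM TEnv.zero 0 t []
    | cons {Γ Δ : TEnv} {k k' : ℕ} {t : CTerm} {L : LType} {M : List LType} :
        Deriv Γ k t L → DerivM Δ k' t M → DerivM (TEnv.add Γ Δ) (k + k') t (L :: M)
end

mutual
  /-- The (applicative) size `|π|` of a derivation: its number of `@` rules. -/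
  def Deriv.size {Γ : TEnv} {k : ℕ} {t : CTerm} {L : LType} : Deriv Γ k t L → ℕ
    | .ax _ _ => 0
    | .lam _ _ _ π => Deriv.size π
    | .app π μ => Deriv.size π + DerivM.size μ + 1
  /-- Size of a multi-type derivation. -/
  def DerivM.size {Γ : TEnv} {k : ℕ} {t : CTerm} {M : List LType} : DerivM Γ k t M → ℕ
    | .nil _ => 0
    | .cons π μ => Deriv.size π + DerivM.size μ
end

/-- Typability `Γ ⊢^k t : L`. -/
def TJ (Γ : TEnv) (k : ℕ) (t : CTerm) (L : LType) : Prop := Nonempty (Deriv Γ k t L)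

/-- Checkers relational interpretation `⟦t⟧⊛ = {(Γ, k, L) | Γ ⊢^k t : L}`. -/
def CSem (t : CTerm) : Set (TEnv × ℕ × LType) := {x | TJ x.1 x.2.1 t x.2.2}

/-- Black type preorder `⊑•type` on ordinary λ-terms. -/
def BTypeLe (t u : Lam) : Prop := CSem (t.tag .black) ⊆ CSem (u.tag .black)

/-! ### Tight typings -/

/-- All arrows occurring in a linear type are silent (`p = q`). -/
inductive AllSilent : LType → Prop
  | atom : AllSilent .atom
  | arrow {M : List LType} {p : Player} {L : LType} :
      (∀ L' ∈ M, AllSilent L') → AllSilent L → AllSilent (.arrow M p p L)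

/-- The number of nonempty multi types occurring in a linear type. -/
def LType.neCount : LType → ℕ
  | .atom => 0
  | .arrow M _ _ L =>
      min M.length 1 + (M.attach.map fun x => LType.neCount x.1).sum + LType.neCount L
decreasing_by
  · have := List.sizeOf_lt_of_mem x.2
    simp only [LType.arrow.sizeOf_spec]
    omega
  · simp only [LType.arrow.sizeOf_spec]
    omega

/-- The number of nonempty multi types occurring in a multi type (counting itself). -/
def mNeCount (m : Multiset LType) : ℕ :=
  min (Multiset.card m) 1 + (m.map LType.neCount).sum

/-- A typing `(Γ, L)` is tight when all the multi types occurring in `Γ` and `L`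
are empty except for exactly one, and all arrows occurring in `(Γ, L)` are silent. -/
def Tight (Γ : TEnv) (L : LType) : Prop :=
  AllSilent L ∧ (∀ n : ℕ, ∀ L' ∈ Γ n, AllSilent L') ∧
    ∃ S : Finset ℕ, (∀ n : ℕ, n ∉ S → Γ n = 0) ∧
      (∑ n ∈ S, mNeCount (Γ n)) + LType.neCount L = 1

/-! ### Helper lemmas -/

/-- Typability with a multi type. -/
def TJM (Γ : TEnv) (k : ℕ) (t : CTerm) (M : List LType) : Prop := Nonempty (DerivM Γ k t M)

theorem TJ_var {Γ : TEnv} {k : ℕ} {x : ℕ} {L : LType} :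
    TJ Γ k (.var x) L ↔ Γ = TEnv.single x L ∧ k = 0 := by
  constructor
  · rintro ⟨h⟩
    cases h
    exact ⟨rfl, rfl⟩
  · rintro ⟨rfl, rfl⟩
    exact ⟨.ax _ _⟩

theorem TJ_lam {Γ : TEnv} {k : ℕ} {p : Player} {t : CTerm} {T : LType} :
    TJ Γ k (.lam p t) T ↔ ∃ q M L, T = .arrow M p q L ∧ TJ (TEnv.cons (↑M) Γ) k t L := by
  constructor
  · rintro ⟨h⟩
    cases h with
    | lam _ q M h => exact ⟨q, M, _, rfl, ⟨h⟩⟩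
  · rintro ⟨q, M, L, rfl, ⟨h⟩⟩
    exact ⟨.lam _ _ _ h⟩

theorem TJ_app {Γ : TEnv} {k : ℕ} {q : Player} {t u : CTerm} {L : LType} :
    TJ Γ k (.app q t u) L ↔ ∃ Γ₁ Γ₂ k₁ k₂ M p, Γ = Γ₁ + Γ₂ ∧ k = k₁ + k₂ + Player.gamma p q ∧
      TJ Γ₁ k₁ t (.arrow M p q L) ∧ TJM Γ₂ k₂ u M := by
  constructor
  · rintro ⟨h⟩
    cases h with
    | app h1 h2 => exact ⟨_, _, _, _, _, _, rfl, rfl, ⟨h1⟩, ⟨h2⟩⟩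
  · rintro ⟨Γ₁, Γ₂, k₁, k₂, M, p, rfl, rfl, ⟨h1⟩, ⟨h2⟩⟩
    exact ⟨.app h1 h2⟩

theorem TJM_nil {Γ : TEnv} {k : ℕ} {t : CTerm} : TJM Γ k t [] ↔ Γ = 0 ∧ k = 0 := by
  constructor
  · rintro ⟨h⟩
    cases h
    exact ⟨rfl, rfl⟩
  · rintro ⟨rfl, rfl⟩
    exact ⟨.nil _⟩

theorem TJM_cons {Γ : TEnv} {k : ℕ} {t : CTerm} {L : LType} {M : List LType} :
    TJM Γ k t (L :: M) ↔ ∃ Γ₁ Γ₂ k₁ k₂, Γ = Γ₁ + Γ₂ ∧ k = k₁ + k₂ ∧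
      TJ Γ₁ k₁ t L ∧ TJM Γ₂ k₂ t M := by
  constructor
  · rintro ⟨h⟩
    cases h with
    | cons h1 h2 => exact ⟨_, _, _, _, rfl, rfl, ⟨h1⟩, ⟨h2⟩⟩
  · rintro ⟨Γ₁, Γ₂, k₁, k₂, rfl, rfl, ⟨h1⟩, ⟨h2⟩⟩
    exact ⟨.cons h1 h2⟩

theorem TJM_append {t : CTerm} {M N : List LType} : ∀ {Γ : TEnv} {k : ℕ},
    TJM Γ k t (M ++ N) ↔ ∃ Γ₁ Γ₂ k₁ k₂, Γ = Γ₁ + Γ₂ ∧ k = k₁ + k₂ ∧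
      TJM Γ₁ k₁ t M ∧ TJM Γ₂ k₂ t N := by
  induction M with
  | nil =>
    intro Γ k
    simp only [List.nil_append, TJM_nil]
    constructor
    · intro h
      exact ⟨0, Γ, 0, k, by simp, by simp, ⟨rfl, rfl⟩, h⟩
    · rintro ⟨_, _, _, _, rfl, rfl, ⟨rfl, rfl⟩, h⟩
      simpa using h
  | cons L M ih =>
    intro Γ k
    simp only [List.cons_append, TJM_cons, ih]
    constructor
    · rintro ⟨A, _, a, _, rfl, rfl, h1, B, C, b, c, rfl, rfl, h2, h3⟩
      exact ⟨A + B, C, a + b, c, (add_assoc _ _ _).symm, (add_assoc _ _ _).symm,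
        ⟨A, B, a, b, rfl, rfl, h1, h2⟩, h3⟩
    · rintro ⟨_, C, _, c, rfl, rfl, ⟨A, B, a, b, rfl, rfl, h1, h2⟩, h3⟩
      exact ⟨A, B + C, a, b + c, add_assoc _ _ _, add_assoc _ _ _, h1, B, C, b, c, rfl, rfl, h2, h3⟩

theorem TJM_perm {t : CTerm} {M N : List LType} (h : M.Perm N) : ∀ {Γ : TEnv} {k : ℕ},
    TJM Γ k t M → TJM Γ k t N := by
  induction h with
  | nil => exact fun h => h
  | cons L _ ih =>
    intro Γ k h
    obtain ⟨A, B, a, b, rfl, rfl, h1, h2⟩ := TJM_cons.1 h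
    exact TJM_cons.2 ⟨A, B, a, b, rfl, rfl, h1, ih h2⟩
  | swap L L' M =>
    intro Γ k h
    obtain ⟨A, _, a, _, rfl, rfl, h1, h2⟩ := TJM_cons.1 h
    obtain ⟨B, C, b, c, rfl, rfl, h2, h3⟩ := TJM_cons.1 h2
    exact TJM_cons.2 ⟨B, A + C, b, a + c, add_left_comm _ _ _, add_left_comm _ _ _, h2,
      TJM_cons.2 ⟨A, C, a, c, rfl, rfl, h1, h3⟩⟩
  | trans _ _ ih1 ih2 => exact fun h => ih2 (ih1 h)

/-- Insert a multi type at position `x`. -/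
def insE (x : ℕ) (m : Multiset LType) (Γ : TEnv) : TEnv := fun n =>
  if n < x then Γ n else if n = x then m else Γ (n - 1)

theorem insE_inj {x : ℕ} {m m' : Multiset LType} {Γ Γ' : TEnv} :
    insE x m Γ = insE x m' Γ' ↔ m = m' ∧ Γ = Γ' := by
  constructor
  · intro h
    refine ⟨by simpa [insE] using congrFun h x, ?_⟩
    funext n
    by_cases hn : n < x
    · simpa [insE, hn] using congrFun h n
    · have h1 : ¬ n + 1 < x := by omega
      have h2 : ¬ n + 1 = x := by omega
      simpa [insE, h1, h2] using congrFun h (n + 1)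
  · rintro ⟨rfl, rfl⟩
    rfl

theorem insE_surj (x : ℕ) (Γ : TEnv) : ∃ m Γ', Γ = insE x m Γ' := by
  refine ⟨Γ x, fun n => if n < x then Γ n else Γ (n + 1), ?_⟩
  funext n
  unfold insE
  by_cases h : n < x
  · simp [h]
  · by_cases h2 : n = x
    · simp [h2]
    · have h3 : ¬ n - 1 < x := by omega
      have h4 : n - 1 + 1 = n := by omega
      simp [h, h2, h3, h4]

theorem insE_add (x : ℕ) (m m' : Multiset LType) (Γ Γ' : TEnv) :
    insE x m Γ + insE x m' Γ' = insE x (m + m') (Γ + Γ') := by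
  funext n
  simp only [insE, Pi.add_apply]
  split_ifs <;> rfl

theorem insE_zero (x : ℕ) : insE x 0 0 = 0 := by
  funext n
  simp [insE]

theorem cons_eq (m : Multiset LType) (Γ : TEnv) : TEnv.cons m Γ = insE 0 m Γ := by
  funext n
  cases n <;> simp [TEnv.cons, insE]

theorem insE_comm (x : ℕ) (m m' : Multiset LType) (Γ : TEnv) :
    insE 0 m (insE x m' Γ) = insE (x + 1) m' (insE 0 m Γ) := by
  funext n
  rcases n with _ | n
  · simp [insE]
  · rcases n with _ | n
    · rcases x with _ | x <;> simp [insE]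
    · simp [insE]

theorem single_self (x : ℕ) (L : LType) : TEnv.single x L = insE x {L} 0 := by
  funext n
  simp only [TEnv.single, insE]
  by_cases h : n = x <;> simp [h]

theorem single_lt {n x : ℕ} (h : n < x) (L : LType) :
    TEnv.single n L = insE x 0 (TEnv.single n L) := by
  funext i
  simp only [TEnv.single, insE]
  split_ifs <;> first | rfl | (exfalso; omega)

theorem single_gt {n x : ℕ} (h : x ≤ n) (L : LType) :
    TEnv.single (n + 1) L = insE x 0 (TEnv.single n L) := by
  funext i
  simp only [TEnv.single, insE]
  split_ifs <;> first | rfl | (exfalso; omega)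

theorem TJM_lift_aux {t : CTerm} {d : ℕ}
    (H : ∀ Γ k L, TJ Γ k (t.liftAt d) L ↔ ∃ Γ', Γ = insE d 0 Γ' ∧ TJ Γ' k t L) (M : List LType) :
    ∀ Γ k, TJM Γ k (t.liftAt d) M ↔ ∃ Γ', Γ = insE d 0 Γ' ∧ TJM Γ' k t M := by
  induction M with
  | nil =>
    intro Γ k
    simp only [TJM_nil]
    constructor
    · rintro ⟨rfl, rfl⟩
      exact ⟨0, (insE_zero d).symm, rfl, rfl⟩
    · rintro ⟨_, rfl, rfl, rfl⟩
      exact ⟨insE_zero d, rfl⟩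
  | cons L M ih =>
    intro Γ k
    simp only [TJM_cons, ih, H]
    constructor
    · rintro ⟨_, _, a, b, rfl, rfl, ⟨A, rfl, h1⟩, ⟨B, rfl, h2⟩⟩
      exact ⟨A + B, by rw [insE_add, add_zero], A, B, a, b, rfl, rfl, h1, h2⟩
    · rintro ⟨_, rfl, A, B, a, b, rfl, rfl, h1, h2⟩
      exact ⟨_, _, a, b, by rw [insE_add, add_zero], rfl, ⟨A, rfl, h1⟩, ⟨B, rfl, h2⟩⟩

theorem TJ_lift (t : CTerm) : ∀ (d : ℕ) (Γ : TEnv) (k : ℕ) (L : LType),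
    TJ Γ k (t.liftAt d) L ↔ ∃ Γ', Γ = insE d 0 Γ' ∧ TJ Γ' k t L := by
  induction t with
  | var n =>
    intro d Γ k L
    simp only [CTerm.liftAt, TJ_var]
    by_cases h : n < d
    · simp only [h, if_true]
      constructor
      · rintro ⟨rfl, rfl⟩
        exact ⟨_, single_lt h L, rfl, rfl⟩
      · rintro ⟨_, rfl, rfl, rfl⟩
        exact ⟨(single_lt h L).symm, rfl⟩
    · simp only [h, if_false]
      rw [single_gt (not_lt.1 h)]
      constructor
      · rintro ⟨rfl, rfl⟩
        exact ⟨_, rfl, rfl, rfl⟩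
      · rintro ⟨_, rfl, rfl, rfl⟩
        exact ⟨rfl, rfl⟩
  | lam p t ih =>
    intro d Γ k T
    simp only [CTerm.liftAt, TJ_lam, cons_eq, ih]
    constructor
    · rintro ⟨q, M, L, rfl, G, h, h'⟩
      obtain ⟨m, G, rfl⟩ := insE_surj 0 G
      rw [← insE_comm, insE_inj] at h
      obtain ⟨rfl, rfl⟩ := h
      exact ⟨G, rfl, q, M, L, rfl, h'⟩
    · rintro ⟨G, rfl, q, M, L, rfl, h'⟩
      exact ⟨q, M, L, rfl, _, insE_comm _ _ _ _, h'⟩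
  | app p t u iht ihu =>
    intro d Γ k L
    simp only [CTerm.liftAt, TJ_app, iht, TJM_lift_aux (ihu d)]
    constructor
    · rintro ⟨_, _, a, b, M, q, rfl, rfl, ⟨A, rfl, h1⟩, ⟨B, rfl, h2⟩⟩
      exact ⟨A + B, by rw [insE_add, add_zero], A, B, a, b, M, q, rfl, rfl, h1, h2⟩
    · rintro ⟨_, rfl, A, B, a, b, M, q, rfl, rfl, h1, h2⟩
      exact ⟨_, _, a, b, M, q, by rw [insE_add, add_zero], rfl, ⟨A, rfl, h1⟩, ⟨B, rfl, h2⟩⟩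

theorem TJM_lift (t : CTerm) (d : ℕ) (M : List LType) (Γ : TEnv) (k : ℕ) :
    TJM Γ k (t.liftAt d) M ↔ ∃ Γ', Γ = insE d 0 Γ' ∧ TJM Γ' k t M :=
  TJM_lift_aux (TJ_lift t d) M Γ k

/-- Splitting a multi typing along a multiset sum. -/
theorem TJM_split {t : CTerm} {M : List LType} {m n : Multiset LType} {Γ : TEnv} {k : ℕ}
    (hM : (M : Multiset LType) = m + n) (h : TJM Γ k t M) :
    ∃ (A B : List LType) (Γ₁ Γ₂ : TEnv) (k₁ k₂ : ℕ), (A : Multiset LType) = m ∧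
      (B : Multiset LType) = n ∧ Γ = Γ₁ + Γ₂ ∧ k = k₁ + k₂ ∧ TJM Γ₁ k₁ t A ∧ TJM Γ₂ k₂ t B := by
  induction m using Quotient.inductionOn with | _ A
  induction n using Quotient.inductionOn with | _ B
  have hp : M.Perm (A ++ B) := Multiset.coe_eq_coe.1 hM
  obtain ⟨G, D, a, b, h1, h2, h3, h4⟩ := TJM_append.1 (TJM_perm hp h)
  exact ⟨A, B, G, D, a, b, rfl, rfl, h1, h2, h3, h4⟩

/-- Substitution decomposition for a linear-type judgement. -/
def Dec (Γ : TEnv) (k x : ℕ) (u : CTerm) (J : TEnv → ℕ → Prop) : Prop :=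
  ∃ (Γ₁ Δ : TEnv) (k₁ k₂ : ℕ) (M : List LType), Γ = Γ₁ + Δ ∧ k = k₁ + k₂ ∧
    J (insE x M Γ₁) k₁ ∧ TJM Δ k₂ u M

/-- Decomposition commutes with sums of judgements. -/
theorem Dec_add {Γ : TEnv} {k x c : ℕ} {u : CTerm} {J K : TEnv → ℕ → Prop} :
    (∃ Γ₁ Γ₂ k₁ k₂, Γ = Γ₁ + Γ₂ ∧ k = k₁ + k₂ + c ∧ Dec Γ₁ k₁ x u J ∧ Dec Γ₂ k₂ x u K) ↔
    Dec Γ k x u (fun G l => ∃ Γ₁ Γ₂ k₁ k₂, G = Γ₁ + Γ₂ ∧ l = k₁ + k₂ + c ∧ J Γ₁ k₁ ∧ K Γ₂ k₂) := by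
  constructor
  · rintro ⟨_, _, _, _, rfl, rfl, ⟨A, B, a, b, M, rfl, rfl, h1, h2⟩,
      ⟨C, D, c', d, N, rfl, rfl, h3, h4⟩⟩
    refine ⟨A + C, B + D, a + c' + c, b + d, M ++ N, add_add_add_comm _ _ _ _, by omega,
      ⟨_, _, _, _, ?_, rfl, h1, h3⟩, TJM_append.2 ⟨_, _, _, _, rfl, rfl, h2, h4⟩⟩
    rw [insE_add]
    rfl
  · rintro ⟨G, D, a, b, M, rfl, rfl, ⟨G1, G2, c1, c2, h, rfl, hJ, hK⟩, hM⟩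
    obtain ⟨m, G1, rfl⟩ := insE_surj x G1
    obtain ⟨n, G2, rfl⟩ := insE_surj x G2
    rw [insE_add, insE_inj] at h
    obtain ⟨h, rfl⟩ := h
    obtain ⟨A, B, D1, D2, d1, d2, rfl, rfl, rfl, rfl, h1, h2⟩ := TJM_split h hM
    exact ⟨G1 + D1, G2 + D2, c1 + d1, c2 + d2, add_add_add_comm _ _ _ _, by omega,
      ⟨_, _, _, _, A, rfl, rfl, hJ, h1⟩, ⟨_, _, _, _, B, rfl, rfl, hK, h2⟩⟩

theorem TJM_subst_aux {t u : CTerm} {x : ℕ}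
    (H : ∀ Γ k L, TJ Γ k (t.subst x u) L ↔ Dec Γ k x u (fun G l => TJ G l t L)) (M : List LType) :
    ∀ Γ k, TJM Γ k (t.subst x u) M ↔ Dec Γ k x u (fun G l => TJM G l t M) := by
  induction M with
  | nil =>
    intro Γ k
    simp only [TJM_nil]
    constructor
    · rintro ⟨rfl, rfl⟩
      exact ⟨0, 0, 0, 0, [], by simp, rfl, ⟨insE_zero x, rfl⟩, TJM_nil.2 ⟨rfl, rfl⟩⟩
    · rintro ⟨G, D, a, b, M, rfl, rfl, ⟨h, rfl⟩, hM⟩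
      rw [← insE_zero x, insE_inj, Multiset.coe_eq_zero] at h
      obtain ⟨rfl, rfl⟩ := h
      obtain ⟨rfl, rfl⟩ := TJM_nil.1 hM
      simp
  | cons L M ih =>
    intro Γ k
    simp only [TJM_cons, ih, H]
    exact Dec_add (c := 0)

theorem TJ_subst (t : CTerm) : ∀ (x : ℕ) (u : CTerm) (Γ : TEnv) (k : ℕ) (L : LType),
    TJ Γ k (t.subst x u) L ↔ Dec Γ k x u (fun G l => TJ G l t L) := by
  induction t with
  | var n =>
    intro x u Γ k L
    -- a variable that is not substituted
    have key : ∀ n', TEnv.single n L = insE x 0 (TEnv.single n' L) →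
        (TJ Γ k (.var n') L ↔ Dec Γ k x u (fun G l => TJ G l (.var n) L)) := by
      intro n' hn
      simp only [Dec, TJ_var, hn]
      constructor
      · rintro ⟨rfl, rfl⟩
        exact ⟨_, 0, 0, 0, [], (add_zero _).symm, rfl, ⟨rfl, rfl⟩, TJM_nil.2 ⟨rfl, rfl⟩⟩
      · rintro ⟨G, D, a, b, M, rfl, rfl, ⟨h, rfl⟩, hM⟩
        rw [insE_inj, Multiset.coe_eq_zero] at h
        obtain ⟨rfl, rfl⟩ := h
        obtain ⟨rfl, rfl⟩ := TJM_nil.1 hM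
        simp
    simp only [CTerm.subst]
    by_cases h : n = x
    · subst h
      simp only [if_true, Dec, TJ_var, single_self]
      constructor
      · intro h
        exact ⟨0, Γ, 0, k, [L], (zero_add _).symm, (zero_add _).symm, ⟨rfl, rfl⟩,
          TJM_cons.2 ⟨Γ, 0, k, 0, (add_zero _).symm, rfl, h, TJM_nil.2 ⟨rfl, rfl⟩⟩⟩
      · rintro ⟨G, D, a, b, M, rfl, rfl, ⟨h, rfl⟩, hM⟩
        rw [insE_inj, Multiset.coe_eq_singleton] at h
        obtain ⟨rfl, rfl⟩ := h
        obtain ⟨A, B, c, d, rfl, rfl, h1, h2⟩ := TJM_cons.1 hM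
        obtain ⟨rfl, rfl⟩ := TJM_nil.1 h2
        simpa using h1
    · rw [if_neg h]
      by_cases h2 : x < n
      · rw [if_pos h2]
        obtain ⟨m, rfl⟩ : ∃ m, n = m + 1 := ⟨n - 1, by omega⟩
        exact key m (single_gt (by omega) L)
      · rw [if_neg h2]
        exact key n (single_lt (by omega) L)
  | lam p t ih =>
    intro x u Γ k T
    simp only [CTerm.subst, TJ_lam, cons_eq, ih, Dec, TJM_lift]
    constructor
    · rintro ⟨q, M, L, rfl, G, _, a, b, N, h, rfl, h1, D, rfl, h2⟩
      obtain ⟨m, G, rfl⟩ := insE_surj 0 G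
      rw [insE_add, insE_inj, add_zero] at h
      obtain ⟨rfl, rfl⟩ := h
      rw [← insE_comm] at h1
      exact ⟨G, D, a, b, N, rfl, rfl, ⟨q, M, L, rfl, h1⟩, h2⟩
    · rintro ⟨G, D, a, b, N, rfl, rfl, ⟨q, M, L, rfl, h1⟩, h2⟩
      rw [insE_comm] at h1
      exact ⟨q, M, L, rfl, _, _, a, b, N, by rw [insE_add, add_zero], rfl, h1, D, rfl, h2⟩
  | app q t s iht ihs =>
    intro x u Γ k L
    have e : ∀ (Γ : TEnv) (k : ℕ) (t s : CTerm), TJ Γ k (.app q t s) L ↔ ∃ M p, ∃ Γ₁ Γ₂ k₁ k₂,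
        Γ = Γ₁ + Γ₂ ∧ k = k₁ + k₂ + Player.gamma p q ∧
        TJ Γ₁ k₁ t (.arrow M p q L) ∧ TJM Γ₂ k₂ s M := by
      intro Γ k t s
      rw [TJ_app]
      constructor
      · rintro ⟨A, B, a, b, M, p, h⟩
        exact ⟨M, p, A, B, a, b, h⟩
      · rintro ⟨M, p, A, B, a, b, h⟩
        exact ⟨A, B, a, b, M, p, h⟩
    simp only [CTerm.subst, e, iht, TJM_subst_aux (ihs x u), Dec_add]
    constructor
    · rintro ⟨M, p, A, B, a, b, N, h1, h2, h3, h4⟩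
      exact ⟨A, B, a, b, N, h1, h2, ⟨M, p, h3⟩, h4⟩
    · rintro ⟨A, B, a, b, N, h1, h2, ⟨M, p, h3⟩, h4⟩
      exact ⟨M, p, A, B, a, b, N, h1, h2, h3, h4⟩

theorem TJ_beta (p : Player) (t u : CTerm) (Γ : TEnv) (k : ℕ) (L : LType) :
    TJ Γ k (.app p (.lam p t) u) L ↔ TJ Γ k (t.subst 0 u) L := by
  rw [TJ_subst]
  simp only [TJ_app, TJ_lam, cons_eq, Dec]
  constructor
  · rintro ⟨A, B, a, b, M, q, rfl, rfl, ⟨q', M', L', h, h1⟩, h2⟩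
    cases h
    exact ⟨A, B, a, b, M, rfl, by simp [Player.gamma], h1, h2⟩
  · rintro ⟨A, B, a, b, M, rfl, rfl, h1, h2⟩
    exact ⟨A, B, a, b, M, p, rfl, by simp [Player.gamma], ⟨p, M, L, rfl, h1⟩, h2⟩

theorem tag_liftAt (p : Player) (t : Lam) : ∀ d, (t.liftAt d).tag p = (t.tag p).liftAt d := by
  induction t with
  | var n => intro d; rfl
  | lam t ih => intro d; simp [Lam.liftAt, Lam.tag, CTerm.liftAt, ih]
  | app t u iht ihu => intro d; simp [Lam.liftAt, Lam.tag, CTerm.liftAt, iht, ihu]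

theorem tag_subst (p : Player) (t : Lam) : ∀ x u,
    (t.subst x u).tag p = (t.tag p).subst x (u.tag p) := by
  induction t with
  | var n =>
    intro x u
    simp only [Lam.subst, Lam.tag, CTerm.subst]
    split_ifs <;> rfl
  | lam t ih => intro x u; simp [Lam.subst, Lam.tag, CTerm.subst, ih, tag_liftAt]
  | app t u iht ihu => intro x u; simp [Lam.subst, Lam.tag, CTerm.subst, iht, ihu]

theorem BTypeLe_iff {t u : Lam} : BTypeLe t u ↔
    ∀ Γ k L, TJ Γ k (t.tag .black) L → TJ Γ k (u.tag .black) L :=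
  ⟨fun h Γ k L hd => h (show (Γ, k, L) ∈ CSem _ from hd), fun h x hx => h x.1 x.2.1 x.2.2 hx⟩

theorem BTypeLe_lam {t u : Lam} (h : BTypeLe t u) : BTypeLe (.lam t) (.lam u) := by
  rw [BTypeLe_iff] at *
  intro Γ k T
  simp only [Lam.tag, TJ_lam]
  rintro ⟨q, M, L, rfl, h1⟩
  exact ⟨q, M, L, rfl, h _ _ _ h1⟩

theorem BTypeLe_appL {t u : Lam} (s : Lam) (h : BTypeLe t u) :
    BTypeLe (.app t s) (.app u s) := by
  rw [BTypeLe_iff] at *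
  intro Γ k T
  simp only [Lam.tag, TJ_app]
  rintro ⟨A, B, a, b, M, p, rfl, rfl, h1, h2⟩
  exact ⟨A, B, a, b, M, p, rfl, rfl, h _ _ _ h1, h2⟩

theorem TJM_mono {t u : CTerm} (h : ∀ Γ k L, TJ Γ k t L → TJ Γ k u L) (M : List LType) :
    ∀ Γ k, TJM Γ k t M → TJM Γ k u M := by
  induction M with
  | nil => intro Γ k; simp only [TJM_nil]; exact id
  | cons L M ih =>
    intro Γ k
    simp only [TJM_cons]
    rintro ⟨A, B, a, b, rfl, rfl, h1, h2⟩
    exact ⟨A, B, a, b, rfl, rfl, h _ _ _ h1, ih _ _ h2⟩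

theorem BTypeLe_appR {t u : Lam} (s : Lam) (h : BTypeLe t u) :
    BTypeLe (.app s t) (.app s u) := by
  rw [BTypeLe_iff] at *
  intro Γ k T
  simp only [Lam.tag, TJ_app]
  rintro ⟨A, B, a, b, M, p, rfl, rfl, h1, h2⟩
  exact ⟨A, B, a, b, M, p, rfl, rfl, h1, TJM_mono h _ _ _ h2⟩

theorem BTypeLe_fill {t u : Lam} (h : BTypeLe t u) (C : LCtx) :
    BTypeLe (C.fill t) (C.fill u) := by
  induction C with
  | hole => exact h
  | lam C ih => exact BTypeLe_lam ih
  | appL C s ih => exact BTypeLe_appL s ih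
  | appR s C ih => exact BTypeLe_appR s ih

theorem BTypeLe_beta {t u : Lam} (h : LBeta t u) : BTypeLe t u ∧ BTypeLe u t := by
  unfold LBeta at h
  induction h with
  | root h =>
    obtain ⟨t, u⟩ := h
    simp only [BTypeLe_iff, tag_subst, Lam.tag, TJ_beta]
    exact ⟨fun _ _ _ h => h, fun _ _ _ h => h⟩
  | lam _ ih => exact ⟨BTypeLe_lam ih.1, BTypeLe_lam ih.2⟩
  | appL s _ ih => exact ⟨BTypeLe_appL s ih.1, BTypeLe_appL s ih.2⟩
  | appR s _ ih => exact ⟨BTypeLe_appR s ih.1, BTypeLe_appR s ih.2⟩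

theorem eta_fails : ∃ t u, LEta t u ∧ ¬ BTypeLe t u := by
  refine ⟨_, .var 0, .root (.eta (.var 0)), ?_⟩
  rw [BTypeLe_iff]
  intro h
  have h1 := h (TEnv.single 0 (.arrow [] .white .black .atom)) 1 (.arrow [] .black .black .atom) (by
    simp only [Lam.liftAt, Lam.tag, TJ_lam]
    refine ⟨_, _, _, rfl, TJ_app.2 ⟨_, 0, 0, 0, [], .white, (add_zero _).symm, rfl,
      TJ_var.2 ⟨?_, rfl⟩, TJM_nil.2 ⟨rfl, rfl⟩⟩⟩
    rw [cons_eq]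
    exact (single_gt (le_refl 0) _).symm)
  exact absurd (TJ_var.1 h1).2 one_ne_zero

/-- The black type preorder `⊑•type` is an inequational λ-theory: a compatible preorder
containing β-conversion; moreover it is neither extensional (it does not contain
η-conversion) nor semi-extensional (it does not contain η-reduction). -/
theorem btype_inequational_theory :
    (∀ t, BTypeLe t t) ∧
    (∀ t u s, BTypeLe t u → BTypeLe u s → BTypeLe t s) ∧
    (∀ t u, BTypeLe t u → ∀ C : LCtx, BTypeLe (C.fill t) (C.fill u)) ∧
    (∀ t u, LBetaConv t u → BTypeLe t u) ∧
    (∃ t u, LEtaConv t u ∧ ¬ BTypeLe t u) ∧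
    (∃ t u, LEta t u ∧ ¬ BTypeLe t u) := by
  refine ⟨fun t => subset_rfl, fun t u s h1 h2 => h1.trans h2, fun t u h C => BTypeLe_fill h C,
    ?_, ?_, eta_fails⟩
  · intro t u h
    induction h with
    | refl => exact subset_rfl
    | tail _ h ih =>
      rcases h with h | h
      · exact ih.trans (BTypeLe_beta h).1
      · exact ih.trans (BTypeLe_beta h).2
  · obtain ⟨t, u, h, h'⟩ := eta_fails
    exact ⟨t, u, .single (.inl h), h'⟩
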